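/- Error bound for the QOT dual: for every pair of bounded measurable functions f : Ω → ℝ and g : Ω′ → ℝ, ‖f⊕g − f*⊕g*‖_{L²(P⊗Q)} ≤ γ_ε · max(‖f⊕g − f*⊕g*‖_∞, ε) · ‖DΓ(f,g)‖_{L²(P)×L²(Q)}. -/

import Mathlib

open MeasureTheory Metric
open scoped ENNReal

/-- First gradient component `D₁Γ(f,g)(x) = 1 - (1/ε) ∫ (f(x)+g(y)-c(x,y))₊ dQ(y)`. -/
noncomputable def D1Gamma {d : ℕ} (ε : ℝ) (Q : Measure (EuclideanSpace ℝ (Fin d)))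
    (c : EuclideanSpace ℝ (Fin d) → EuclideanSpace ℝ (Fin d) → ℝ)
    (f g : EuclideanSpace ℝ (Fin d) → ℝ) : EuclideanSpace ℝ (Fin d) → ℝ :=
  fun x => 1 - (1 / ε) * ∫ y, max (f x + g y - c x y) 0 ∂Q

/-- Second gradient component `D₂Γ(f,g)(y) = 1 - (1/ε) ∫ (f(x)+g(y)-c(x,y))₊ dP(x)`. -/
noncomputable def D2Gamma {d : ℕ} (ε : ℝ) (P : Measure (EuclideanSpace ℝ (Fin d)))
    (c : EuclideanSpace ℝ (Fin d) → EuclideanSpace ℝ (Fin d) → ℝ)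
    (f g : EuclideanSpace ℝ (Fin d) → ℝ) : EuclideanSpace ℝ (Fin d) → ℝ :=
  fun y => 1 - (1 / ε) * ∫ x, max (f x + g y - c x y) 0 ∂P

/-- The explicit constant `γ_ε` of the PL inequality. -/
noncomputable def gammaEps {d : ℕ} (ε L δP lamP LamP : ℝ)
    (Ω Ω' : Set (EuclideanSpace ℝ (Fin d))) (Q : Measure (EuclideanSpace ℝ (Fin d))) : ℝ :=
  16 * (δP⁻¹ * (max (8 * L / ε) 1) ^ d) * (LamP ^ 2 / lamP ^ 2) *
    (⌈8 * L * Metric.diam Ω / ε⌉ : ℝ) ^ (d + 2) /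
    (⨅ y : Ω', (Q (Metric.ball (y : EuclideanSpace ℝ (Fin d)) (ε / (8 * L)))).toReal)

/-!
Write `h = f ⊕ g - f* ⊕ g*` and `Ψ = f* ⊕ g* - c`. The first-order conditions give
`-ε DΓ(f, g) = (∫ Z dQ, ∫ Z dP)` with `Z = (Ψ + h)₊ - Ψ₊`, and `Z h ≥ (s / M) h²` wherever
`Ψ ≥ s`, as soon as `|h| ≤ M` and `s ≤ M`: the dual objective is strongly concave on the region
where the slack `Ψ` is large.

By the first-order conditions every slice of `Ω × Ω'` contains a point with `Ψ ≥ ε`, and as `Ψ` is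
`3L`-Lipschitz, `Ψ ≥ 5ε/8` on the whole ball of radius `r = ε/(8L)` around it. So the square
integral of `h` over `{Ψ ≥ 5ε/8}` controls the variance of each of its two summands: points of
`Ω` at distance at most `r` are compared through a common ball in `Ω'`, and distant points by
chaining through `K = ⌈diam Ω / r⌉` equally spaced points of the segment between them. The
intermediate points have density bounded by `(K / k)ⁿ` after the change of variables
`y ↦ x + t (y - x)`, which contracts the convex set `Ω` into itself. Hence `‖h‖²` is at most a
constant times `∫ Z h`, and Young's inequality bounds the latter by `‖h‖ ‖DΓ(f, g)‖` once one
summand of `h` has been centred.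
-/

theorem ennreal_sq_sum_le_card_mul_sum_sq {ι : Type*} (s : Finset ι) (f : ι → ℝ≥0∞) :
    (∑ i ∈ s, f i) ^ 2 ≤ s.card * ∑ i ∈ s, f i ^ 2 := by
  have h := ENNReal.rpow_sum_le_const_mul_sum_rpow s f one_le_two
  norm_num at h
  exact h

theorem ennreal_add_sq_le (a b : ℝ≥0∞) : (a + b) ^ 2 ≤ 2 * (a ^ 2 + b ^ 2) := by
  simpa using ennreal_sq_sum_le_card_mul_sum_sq Finset.univ ![a, b]

theorem edist_sq_le_mul_range_sum_edist_sq {α : Type*} [PseudoEMetricSpace α] (f : ℕ → α) (n : ℕ) :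
    edist (f 0) (f n) ^ 2 ≤ n * ∑ i ∈ Finset.range n, edist (f i) (f (i + 1)) ^ 2 := by
  calc edist (f 0) (f n) ^ 2
      ≤ (∑ i ∈ Finset.range n, edist (f i) (f (i + 1))) ^ 2 := by
        gcongr
        exact edist_le_range_sum_edist f n
    _ ≤ n * ∑ i ∈ Finset.range n, edist (f i) (f (i + 1)) ^ 2 := by
        simpa using ennreal_sq_sum_le_card_mul_sum_sq (Finset.range n) _

theorem mul_le_lintegral_of_forall_mem_le {α : Type*} [MeasurableSpace α] {μ : Measure α}
    {s : Set α} {φ : α → ℝ≥0∞} {m w : ℝ≥0∞} (hs : MeasurableSet s) (hm : m ≤ μ s)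
    (hφ : ∀ x ∈ s, w ≤ φ x) : m * w ≤ ∫⁻ x, φ x ∂μ := by
  calc m * w ≤ w * μ s := by rw [mul_comm]; gcongr
    _ = ∫⁻ _ in s, w ∂μ := (setLIntegral_const s w).symm
    _ ≤ ∫⁻ x in s, φ x ∂μ := setLIntegral_mono' hs hφ
    _ ≤ ∫⁻ x, φ x ∂μ := setLIntegral_le_lintegral s φ

theorem le_of_smul_le_of_le_smul {α : Type*} [MeasurableSpace α] {ν P : Measure α}
    [IsProbabilityMeasure P] {lam Lam : ℝ≥0∞} (hl : lam • ν ≤ P) (hu : P ≤ Lam • ν) :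
    lam ≤ Lam := by
  have hl' : lam * ν Set.univ ≤ 1 := by simpa using hl Set.univ
  have hu' : 1 ≤ Lam * ν Set.univ := by simpa using hu Set.univ
  calc lam ≤ lam * (Lam * ν Set.univ) := le_mul_of_one_le_right' hu'
    _ = Lam * (lam * ν Set.univ) := by ring
    _ ≤ Lam := mul_le_of_le_one_right' hl'

section Segment

open AffineMap Module

variable {E : Type*} [NormedAddCommGroup E] [NormedSpace ℝ E] {Ω : Set E}

theorem mul_edist_sq_le_sum_lineMap {α : Type*} [PseudoEMetricSpace α] (hΩ : Convex ℝ Ω)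
    {a : E → α} {H : E → ℝ≥0∞} {q : ℝ≥0∞} {r : ℝ}
    (hlocal : ∀ u ∈ Ω, ∀ v ∈ Ω, dist u v ≤ r → q * edist (a u) (a v) ^ 2 ≤ 2 * (H u + H v))
    {K : ℕ} (hK : 1 ≤ K) {x x' : E} (hx : x ∈ Ω) (hx' : x' ∈ Ω) (hdist : dist x x' ≤ K * r) :
    q * edist (a x) (a x') ^ 2 ≤ K * ∑ i ∈ Finset.range K,
      2 * (H (lineMap x x' (i / K : ℝ)) + H (lineMap x x' ((i + 1 : ℕ) / K : ℝ))) := by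
  have hK0 : (0 : ℝ) < K := mod_cast hK
  set γ : ℕ → E := fun i ↦ lineMap x x' (i / K : ℝ) with hγ
  have hmem : ∀ i ≤ K, γ i ∈ Ω := fun i hi ↦
    hΩ.lineMap_mem hx hx' ⟨by positivity, div_le_one_of_le₀ (mod_cast hi) hK0.le⟩
  have hstep : ∀ i, dist (γ i) (γ (i + 1)) ≤ r := fun i ↦ by
    have hlen : dist (i / K : ℝ) ((i + 1 : ℕ) / K : ℝ) = 1 / K := by
      rw [dist_comm, Real.dist_eq, ← sub_div, Nat.cast_succ, add_sub_cancel_left,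
        abs_of_pos (by positivity)]
    rw [hγ, dist_lineMap_lineMap, hlen, one_div_mul_eq_div, div_le_iff₀' hK0]
    exact hdist
  have hends : edist (a x) (a x') = edist (a (γ 0)) (a (γ K)) := by simp [hγ, hK0.ne']
  calc q * edist (a x) (a x') ^ 2
      ≤ q * (K * ∑ i ∈ Finset.range K, edist (a (γ i)) (a (γ (i + 1))) ^ 2) := by
        rw [hends]
        gcongr
        exact edist_sq_le_mul_range_sum_edist_sq (a ∘ γ) K
    _ = K * ∑ i ∈ Finset.range K, q * edist (a (γ i)) (a (γ (i + 1))) ^ 2 := by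
        rw [mul_left_comm, Finset.mul_sum]
    _ ≤ K * ∑ i ∈ Finset.range K, 2 * (H (γ i) + H (γ (i + 1))) := by
        gcongr K * ∑ i ∈ Finset.range K, ?_ with i hi
        have hiK := Finset.mem_range.1 hi
        exact hlocal _ (hmem i hiK.le) _ (hmem (i + 1) hiK) (hstep i)

variable [MeasurableSpace E] [BorelSpace E]

theorem measurableEmbedding_lineMap (x : E) {t : ℝ} (ht : t ≠ 0) :
    MeasurableEmbedding fun y ↦ lineMap x y t := by
  simp only [lineMap_apply_module']
  exact (measurableEmbedding_addRight x).comp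
    ((measurableEmbedding_const_smul₀ ht).comp (measurableEmbedding_subRight x))

variable [FiniteDimensional ℝ E] {μ : Measure E} [μ.IsAddHaarMeasure]

theorem map_addHaar_lineMap (μ : Measure E) [μ.IsAddHaarMeasure] (x : E) {t : ℝ} (ht : t ≠ 0) :
    μ.map (fun y ↦ lineMap x y t) = ENNReal.ofReal |(t ^ finrank ℝ E)⁻¹| • μ := by
  have hcomp : (fun y ↦ lineMap x y t) = (· + x) ∘ (t • ·) ∘ (· - x) := by
    ext y
    simp [lineMap_apply_module']
  rw [hcomp, ← Measure.map_map (by fun_prop) (by fun_prop),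
    ← Measure.map_map (by fun_prop) (by fun_prop), map_sub_right_eq_self,
    Measure.map_addHaar_smul μ ht, Measure.map_smul, map_add_right_eq_self]

theorem map_lineMap_restrict_le (hΩ : Convex ℝ Ω) {x : E} (hx : x ∈ Ω) {t : ℝ}
    (ht0 : 0 < t) (ht1 : t ≤ 1) :
    (μ.restrict Ω).map (fun y ↦ lineMap x y t) ≤
      ENNReal.ofReal (t ^ finrank ℝ E)⁻¹ • μ.restrict Ω := by
  have hsub : Ω ⊆ (fun y ↦ lineMap x y t) ⁻¹' Ω := fun y hy ↦ hΩ.lineMap_mem hx hy ⟨ht0.le, ht1⟩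
  have hφ := measurableEmbedding_lineMap x ht0.ne'
  calc (μ.restrict Ω).map (fun y ↦ lineMap x y t)
      ≤ (μ.restrict ((fun y ↦ lineMap x y t) ⁻¹' Ω)).map fun y ↦ lineMap x y t :=
        Measure.map_mono (Measure.restrict_mono_set μ hsub) hφ.measurable
    _ = ENNReal.ofReal (t ^ finrank ℝ E)⁻¹ • μ.restrict Ω := by
        rw [← hφ.restrict_map, map_addHaar_lineMap μ x ht0.ne', Measure.restrict_smul,
          abs_of_pos (by positivity)]

variable {P : Measure E} {lam Lam : ℝ≥0∞}

theorem smul_map_lineMap_le (hΩ : Convex ℝ Ω) (hl : lam • μ.restrict Ω ≤ P)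
    (hu : P ≤ Lam • μ.restrict Ω) {x : E} (hx : x ∈ Ω) {t : ℝ} (ht0 : 0 < t) (ht1 : t ≤ 1) :
    lam • P.map (fun y ↦ lineMap x y t) ≤
      (Lam * ENNReal.ofReal (t ^ finrank ℝ E)⁻¹) • P := by
  calc lam • P.map (fun y ↦ lineMap x y t)
      ≤ lam • (Lam • μ.restrict Ω).map fun y ↦ lineMap x y t := by
        gcongr
        exact (measurableEmbedding_lineMap x ht0.ne').measurable
    _ ≤ lam • Lam • ENNReal.ofReal (t ^ finrank ℝ E)⁻¹ • μ.restrict Ω := by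
        rw [Measure.map_smul]
        gcongr
        exact map_lineMap_restrict_le hΩ hx ht0 ht1
    _ = (Lam * ENNReal.ofReal (t ^ finrank ℝ E)⁻¹) • lam • μ.restrict Ω := by
        simp only [smul_smul]
        congr 1
        ring
    _ ≤ (Lam * ENNReal.ofReal (t ^ finrank ℝ E)⁻¹) • P := by gcongr

theorem ae_mem_of_le_smul_restrict (hΩ : Convex ℝ Ω) (hu : P ≤ Lam • μ.restrict Ω) :
    ∀ᵐ x ∂P, x ∈ Ω :=
  (Measure.absolutelyContinuous_of_le_smul hu).ae_le
    (ae_restrict_mem₀ (hΩ.nullMeasurableSet (μ := μ)))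

theorem mul_lintegral_comp_lineMap_le (hΩ : Convex ℝ Ω)
    (hl : lam • μ.restrict Ω ≤ P) (hu : P ≤ Lam • μ.restrict Ω) {x : E} (hx : x ∈ Ω)
    {H : E → ℝ≥0∞} (hH : Measurable H) {t : ℝ} (ht0 : 0 < t) (ht1 : t ≤ 1) :
    lam * ∫⁻ y, H (lineMap x y t) ∂P ≤
      Lam * ENNReal.ofReal (t ^ finrank ℝ E)⁻¹ * ∫⁻ y, H y ∂P := by
  have hφ := (measurableEmbedding_lineMap x ht0.ne').measurable
  calc lam * ∫⁻ y, H (lineMap x y t) ∂P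
      = ∫⁻ y, H y ∂(lam • P.map fun y ↦ lineMap x y t) := by
        rw [lintegral_smul_measure, lintegral_map hH hφ, smul_eq_mul]
    _ ≤ ∫⁻ y, H y ∂((Lam * ENNReal.ofReal (t ^ finrank ℝ E)⁻¹) • P) :=
        lintegral_mono' (smul_map_lineMap_le hΩ hl hu hx ht0 ht1) le_rfl
    _ = Lam * ENNReal.ofReal (t ^ finrank ℝ E)⁻¹ * ∫⁻ y, H y ∂P := by
        rw [lintegral_smul_measure, smul_eq_mul]

theorem inv_natCast_div_pow_le {k K : ℕ} (hk : 0 < k) (n : ℕ) :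
    ENNReal.ofReal (((k : ℝ) / K) ^ n)⁻¹ ≤ (K : ℝ≥0∞) ^ n := by
  rw [← inv_pow, inv_div, ← ENNReal.ofReal_natCast K, ← ENNReal.ofReal_pow (by positivity)]
  gcongr
  exact div_le_self (by positivity) (mod_cast hk)

theorem mul_lintegral_prod_comp_lineMap_le [IsProbabilityMeasure P] (hΩ : Convex ℝ Ω)
    (hl : lam • μ.restrict Ω ≤ P) (hu : P ≤ Lam • μ.restrict Ω) {H : E → ℝ≥0∞}
    (hH : Measurable H) {k K : ℕ} (hK : 1 ≤ K) (hkK : k ≤ K) :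
    lam * ∫⁻ z, H (lineMap z.1 z.2 (k / K : ℝ)) ∂(P.prod P) ≤
      Lam * K ^ finrank ℝ E * ∫⁻ x, H x ∂P := by
  obtain rfl | hk := k.eq_zero_or_pos
  · have hfst : ∫⁻ z : E × E, H z.1 ∂(P.prod P) = ∫⁻ x, H x ∂P :=
      measurePreserving_fst.lintegral_comp hH
    calc lam * ∫⁻ z, H (lineMap z.1 z.2 ((0 : ℕ) / K : ℝ)) ∂(P.prod P)
        = lam * ∫⁻ x, H x ∂P := by simp [hfst]
      _ ≤ Lam * K ^ finrank ℝ E * ∫⁻ x, H x ∂P := by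
        gcongr
        exact le_mul_of_le_of_one_le (le_of_smul_le_of_le_smul hl hu)
          (one_le_pow₀ (mod_cast hK))
  have hmeas : Measurable fun z : E × E ↦ H (lineMap z.1 z.2 (k / K : ℝ)) := by
    simp only [lineMap_apply_module]
    fun_prop
  rw [lintegral_prod _ hmeas.aemeasurable, ← lintegral_const_mul _ hmeas.lintegral_prod_right']
  calc ∫⁻ x, lam * ∫⁻ y, H (lineMap x y (k / K : ℝ)) ∂P ∂P
      ≤ ∫⁻ _, Lam * K ^ finrank ℝ E * ∫⁻ x, H x ∂P ∂P := by
        refine lintegral_mono_ae ((ae_mem_of_le_smul_restrict hΩ hu).mono fun x hx ↦ ?_)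
        refine (mul_lintegral_comp_lineMap_le hΩ hl hu hx hH (by positivity) ?_).trans ?_
        · exact div_le_one_of_le₀ (mod_cast hkK) (Nat.cast_nonneg K)
        · gcongr
          exact inv_natCast_div_pow_le hk _
    _ = Lam * K ^ finrank ℝ E * ∫⁻ x, H x ∂P := by simp

theorem mul_lintegral_edist_sq_le {α : Type*} [PseudoEMetricSpace α] [IsProbabilityMeasure P]
    (hΩ : Convex ℝ Ω) (hl : lam • μ.restrict Ω ≤ P) (hu : P ≤ Lam • μ.restrict Ω)
    {a : E → α} {H : E → ℝ≥0∞} (hH : Measurable H) {q : ℝ≥0∞} {r : ℝ}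
    (hlocal : ∀ u ∈ Ω, ∀ v ∈ Ω, dist u v ≤ r → q * edist (a u) (a v) ^ 2 ≤ 2 * (H u + H v))
    {K : ℕ} (hK : 1 ≤ K) (hdist : ∀ u ∈ Ω, ∀ v ∈ Ω, dist u v ≤ K * r) :
    lam * (q * ∫⁻ z, edist (a z.1) (a z.2) ^ 2 ∂(P.prod P)) ≤
      4 * Lam * K ^ (finrank ℝ E + 2) * ∫⁻ x, H x ∂P := by
  have hΩae := ae_mem_of_le_smul_restrict hΩ hu
  have hmeas : ∀ i : ℕ, Measurable fun z : E × E ↦ H (lineMap z.1 z.2 (i / K : ℝ)) := fun i ↦ by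
    simp only [lineMap_apply_module]
    fun_prop
  set J : ℕ → ℝ≥0∞ := fun i ↦ ∫⁻ z, H (lineMap z.1 z.2 (i / K : ℝ)) ∂(P.prod P)
  have hJle : ∀ i ≤ K, lam * J i ≤ Lam * K ^ finrank ℝ E * ∫⁻ x, H x ∂P := fun i hi ↦
    mul_lintegral_prod_comp_lineMap_le hΩ hl hu hH hK hi
  calc lam * (q * ∫⁻ z, edist (a z.1) (a z.2) ^ 2 ∂(P.prod P))
      ≤ lam * ∫⁻ z, K * ∑ i ∈ Finset.range K, 2 * (H (lineMap z.1 z.2 (i / K : ℝ)) +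
          H (lineMap z.1 z.2 ((i + 1 : ℕ) / K : ℝ))) ∂(P.prod P) := by
        gcongr
        refine (lintegral_const_mul_le _ _).trans (lintegral_mono_ae ?_)
        filter_upwards [Measure.quasiMeasurePreserving_fst.ae hΩae,
          Measure.quasiMeasurePreserving_snd.ae hΩae] with z hz hz'
        exact mul_edist_sq_le_sum_lineMap hΩ hlocal hK hz hz' (hdist _ hz _ hz')
    _ = K * ∑ i ∈ Finset.range K, 2 * (lam * J i + lam * J (i + 1)) := by
        rw [lintegral_const_mul _ (by fun_prop), lintegral_finsetSum _ (by fun_prop),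
          mul_left_comm, Finset.mul_sum]
        congr 1
        refine Finset.sum_congr rfl fun i _ ↦ ?_
        rw [lintegral_const_mul _ (by fun_prop), lintegral_add_left (hmeas i)]
        ring
    _ ≤ K * ∑ _i ∈ Finset.range K, 2 * (Lam * K ^ finrank ℝ E * ∫⁻ x, H x ∂P +
          Lam * K ^ finrank ℝ E * ∫⁻ x, H x ∂P) := by
        gcongr K * ∑ i ∈ Finset.range K, 2 * (?_ + ?_) with i hi
        · exact hJle i (Finset.mem_range.1 hi).le
        · exact hJle (i + 1) (Finset.mem_range.1 hi)
    _ = 4 * Lam * K ^ (finrank ℝ E + 2) * ∫⁻ x, H x ∂P := by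
        rw [Finset.sum_const, Finset.card_range, nsmul_eq_mul]
        ring

end Segment

section Poincare

variable {X Y : Type*} [MeasurableSpace X] [MeasurableSpace Y] {P : Measure X} {Q : Measure Y}
  {a : X → ℝ} {b : Y → ℝ} {S : Set (X × Y)}

theorem measurable_indicator_enorm_add_sq (ha : Measurable a) (hb : Measurable b)
    (hS : MeasurableSet S) : Measurable (S.indicator fun z ↦ ‖a z.1 + b z.2‖ₑ ^ 2) :=
  Measurable.indicator (by fun_prop) hS

theorem mul_edist_sq_le_lintegral_add_lintegral (ha : Measurable a) (hb : Measurable b)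
    (hS : MeasurableSet S) {B : Set Y} (hB : MeasurableSet B) {q : ℝ≥0∞} (hq : q ≤ Q B) {u v : X}
    (hu : ∀ y ∈ B, (u, y) ∈ S) (hv : ∀ y ∈ B, (v, y) ∈ S) :
    q * edist (a u) (a v) ^ 2 ≤
      2 * (∫⁻ y, S.indicator (fun z ↦ ‖a z.1 + b z.2‖ₑ ^ 2) (u, y) ∂Q +
        ∫⁻ y, S.indicator (fun z ↦ ‖a z.1 + b z.2‖ₑ ^ 2) (v, y) ∂Q) := by
  have := measurable_indicator_enorm_add_sq ha hb hS
  rw [← lintegral_add_left (by fun_prop), ← lintegral_const_mul _ (by fun_prop)]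
  refine mul_le_lintegral_of_forall_mem_le hB hq fun y hy ↦ ?_
  rw [Set.indicator_of_mem (hu y hy), Set.indicator_of_mem (hv y hy),
    show edist (a u) (a v) = ‖(a u + b y) - (a v + b y)‖ₑ by
      rw [add_sub_add_right_eq_sub, edist_eq_enorm_sub]]
  exact (pow_le_pow_left₀ zero_le enorm_sub_le 2).trans (ennreal_add_sq_le _ _)

theorem mul_enorm_add_sq_le_lintegral_add_lintegral (ha : Measurable a) (hb : Measurable b)
    (hS : MeasurableSet S) {B : Set X} (hB : MeasurableSet B) {p : ℝ≥0∞} (hp : p ≤ P B) {y : Y}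
    (hy : ∀ u ∈ B, (u, y) ∈ S) (x : X) :
    p * ‖a x + b y‖ₑ ^ 2 ≤
      2 * (∫⁻ u, edist (a x) (a u) ^ 2 ∂P +
        ∫⁻ u, S.indicator (fun z ↦ ‖a z.1 + b z.2‖ₑ ^ 2) (u, y) ∂P) := by
  have := measurable_indicator_enorm_add_sq ha hb hS
  rw [← lintegral_add_left (by fun_prop), ← lintegral_const_mul _ (by fun_prop)]
  refine mul_le_lintegral_of_forall_mem_le hB hp fun u hu ↦ ?_
  rw [Set.indicator_of_mem (hy u hu), show a x + b y = (a x - a u) + (a u + b y) by ring,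
    edist_eq_enorm_sub]
  exact (pow_le_pow_left₀ zero_le (enorm_add_le _ _) 2).trans (ennreal_add_sq_le _ _)

theorem mul_lintegral_enorm_add_sq_le [IsProbabilityMeasure P] [IsProbabilityMeasure Q]
    (ha : Measurable a) (hb : Measurable b) (hS : MeasurableSet S) {p : ℝ≥0∞}
    (hfiber : ∀ᵐ y ∂Q, ∃ B, MeasurableSet B ∧ p ≤ P B ∧ ∀ u ∈ B, (u, y) ∈ S) :
    p * ∫⁻ z, ‖a z.1 + b z.2‖ₑ ^ 2 ∂(P.prod Q) ≤
      2 * (∫⁻ z, edist (a z.1) (a z.2) ^ 2 ∂(P.prod P) +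
        ∫⁻ z in S, ‖a z.1 + b z.2‖ₑ ^ 2 ∂(P.prod Q)) := by
  set Φ := S.indicator fun z ↦ ‖a z.1 + b z.2‖ₑ ^ 2
  have hΦ : Measurable Φ := measurable_indicator_enorm_add_sq ha hb hS
  have hVm : Measurable fun x ↦ ∫⁻ u, edist (a x) (a u) ^ 2 ∂P :=
    Measurable.lintegral_prod_right' (f := fun z : X × X ↦ edist (a z.1) (a z.2) ^ 2)
      (by fun_prop)
  have : Measurable fun y ↦ ∫⁻ u, Φ (u, y) ∂P := hΦ.lintegral_prod_left'
  rw [← lintegral_const_mul _ (by fun_prop), ← lintegral_indicator hS,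
    lintegral_prod_symm _ (by fun_prop), lintegral_prod_symm _ hΦ.aemeasurable,
    lintegral_prod _ (by fun_prop)]
  calc ∫⁻ y, ∫⁻ x, p * ‖a x + b y‖ₑ ^ 2 ∂P ∂Q
      ≤ ∫⁻ y, ∫⁻ x, 2 * (∫⁻ u, edist (a x) (a u) ^ 2 ∂P + ∫⁻ u, Φ (u, y) ∂P) ∂P ∂Q := by
        refine lintegral_mono_ae (hfiber.mono fun y hy ↦ lintegral_mono fun x ↦ ?_)
        obtain ⟨B, hB, hpB, hBS⟩ := hy
        exact mul_enorm_add_sq_le_lintegral_add_lintegral ha hb hS hB hpB hBS x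
    _ = ∫⁻ y, 2 * (∫⁻ x, ∫⁻ u, edist (a x) (a u) ^ 2 ∂P ∂P + ∫⁻ u, Φ (u, y) ∂P) ∂Q := by
        refine lintegral_congr fun y ↦ ?_
        rw [lintegral_const_mul _ (by fun_prop), lintegral_add_left hVm, lintegral_const,
          measure_univ, mul_one]
    _ = 2 * (∫⁻ x, ∫⁻ u, edist (a x) (a u) ^ 2 ∂P ∂P + ∫⁻ y, ∫⁻ u, Φ (u, y) ∂P ∂Q) := by
        rw [lintegral_const_mul _ (by fun_prop), lintegral_add_left measurable_const,
          lintegral_const, measure_univ, mul_one]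

end Poincare

theorem ofReal_integral_sq_eq_lintegral_enorm_sq {α : Type*} [MeasurableSpace α] {ν : Measure α}
    {u : α → ℝ} (hu : MemLp u 2 ν) :
    ENNReal.ofReal (∫ z, u z ^ 2 ∂ν) = ∫⁻ z, ‖u z‖ₑ ^ 2 ∂ν := by
  simpa [enorm_pow] using ofReal_integral_norm_eq_lintegral_enorm hu.integrable_sq

section ConvexMargin

variable {E Y : Type*} [NormedAddCommGroup E] [NormedSpace ℝ E] [FiniteDimensional ℝ E]
  [MeasurableSpace E] [BorelSpace E] {μ : Measure E} [μ.IsAddHaarMeasure]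
  [PseudoMetricSpace Y] [MeasurableSpace Y] [OpensMeasurableSpace Y]
  {Ω : Set E} {Ω' : Set Y} {P : Measure E} [IsProbabilityMeasure P]
  {Q : Measure Y} [IsProbabilityMeasure Q] {S : Set (E × Y)} {r : ℝ} {K : ℕ} {a : E → ℝ} {b : Y → ℝ}

theorem mul_lintegral_enorm_add_sq_le_setLIntegral {lam Lam p q : ℝ≥0∞} (hΩ : Convex ℝ Ω)
    (hl : lam • μ.restrict Ω ≤ P) (hu : P ≤ Lam • μ.restrict Ω) (hQ : ∀ᵐ y ∂Q, y ∈ Ω')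
    (hp : ∀ x ∈ Ω, p ≤ P (ball x r)) (hq : ∀ y ∈ Ω', q ≤ Q (ball y r))
    (hK : 1 ≤ K) (hdist : ∀ u ∈ Ω, ∀ v ∈ Ω, dist u v ≤ K * r) (hS : MeasurableSet S)
    (hSfst : ∀ x ∈ Ω, ∃ y ∈ Ω', closedBall (x, y) r ⊆ S)
    (hSsnd : ∀ y ∈ Ω', ∃ x ∈ Ω, closedBall (x, y) r ⊆ S)
    (ha : Measurable a) (hb : Measurable b) :
    lam * p * q * ∫⁻ z, ‖a z.1 + b z.2‖ₑ ^ 2 ∂(P.prod Q) ≤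
      10 * Lam * K ^ (Module.finrank ℝ E + 2) *
        ∫⁻ z in S, ‖a z.1 + b z.2‖ₑ ^ 2 ∂(P.prod Q) := by
  set Φ := S.indicator fun z ↦ ‖a z.1 + b z.2‖ₑ ^ 2
  have hΦ : Measurable Φ := measurable_indicator_enorm_add_sq ha hb hS
  set I := ∫⁻ z in S, ‖a z.1 + b z.2‖ₑ ^ 2 ∂(P.prod Q)
  have hI : ∫⁻ x, ∫⁻ y, Φ (x, y) ∂Q ∂P = I := by
    rw [← lintegral_prod _ hΦ.aemeasurable, lintegral_indicator hS]
  set V := ∫⁻ z, edist (a z.1) (a z.2) ^ 2 ∂(P.prod P)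
  have hV : lam * (q * V) ≤ 4 * Lam * K ^ (Module.finrank ℝ E + 2) * I := by
    rw [← hI]
    refine mul_lintegral_edist_sq_le hΩ hl hu hΦ.lintegral_prod_right' (fun u hu v _ huv ↦ ?_)
      hK hdist
    obtain ⟨y, hy, hball⟩ := hSfst u hu
    refine mul_edist_sq_le_lintegral_add_lintegral ha hb hS measurableSet_ball (hq y hy)
      (fun w hw ↦ hball ?_) (fun w hw ↦ hball ?_)
    · exact max_le (by simpa using dist_nonneg.trans huv) (mem_ball.1 hw).le
    · exact max_le (dist_comm u v ▸ huv) (mem_ball.1 hw).le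
  have hN : p * ∫⁻ z, ‖a z.1 + b z.2‖ₑ ^ 2 ∂(P.prod Q) ≤ 2 * (V + I) := by
    refine mul_lintegral_enorm_add_sq_le ha hb hS (hQ.mono fun y hy ↦ ?_)
    obtain ⟨x, hx, hball⟩ := hSsnd y hy
    refine ⟨ball x r, measurableSet_ball, hp x hx, fun u hu ↦ hball ?_⟩
    exact max_le (mem_ball.1 hu).le (by simpa using dist_nonneg.trans (mem_ball.1 hu).le)
  have hlq : lam * q ≤ Lam * K ^ (Module.finrank ℝ E + 2) := by
    obtain ⟨y, hy⟩ := hQ.exists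
    exact mul_le_mul' (le_of_smul_le_of_le_smul hl hu)
      (((hq y hy).trans prob_le_one).trans (one_le_pow₀ (mod_cast hK)))
  calc lam * p * q * ∫⁻ z, ‖a z.1 + b z.2‖ₑ ^ 2 ∂(P.prod Q)
      = lam * q * (p * ∫⁻ z, ‖a z.1 + b z.2‖ₑ ^ 2 ∂(P.prod Q)) := by ring
    _ ≤ lam * q * (2 * (V + I)) := by gcongr
    _ = 2 * (lam * (q * V) + lam * q * I) := by ring
    _ ≤ 2 * (4 * Lam * K ^ (Module.finrank ℝ E + 2) * I +
          Lam * K ^ (Module.finrank ℝ E + 2) * I) := by gcongr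
    _ = 10 * Lam * K ^ (Module.finrank ℝ E + 2) * I := by ring

theorem mul_integral_add_sq_le_setIntegral {lam Lam p q : ℝ} (hlam : 0 ≤ lam) (hLam : 0 ≤ Lam)
    (hp0 : 0 ≤ p) (hq0 : 0 ≤ q) (hΩ : Convex ℝ Ω)
    (hl : ENNReal.ofReal lam • μ.restrict Ω ≤ P) (hu : P ≤ ENNReal.ofReal Lam • μ.restrict Ω)
    (hQ : ∀ᵐ y ∂Q, y ∈ Ω') (hp : ∀ x ∈ Ω, ENNReal.ofReal p ≤ P (ball x r))
    (hq : ∀ y ∈ Ω', ENNReal.ofReal q ≤ Q (ball y r))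
    (hK : 1 ≤ K) (hdist : ∀ u ∈ Ω, ∀ v ∈ Ω, dist u v ≤ K * r) (hS : MeasurableSet S)
    (hSfst : ∀ x ∈ Ω, ∃ y ∈ Ω', closedBall (x, y) r ⊆ S)
    (hSsnd : ∀ y ∈ Ω', ∃ x ∈ Ω, closedBall (x, y) r ⊆ S)
    (ha : Measurable a) (hb : Measurable b)
    (hab : MemLp (fun z ↦ a z.1 + b z.2) 2 (P.prod Q)) :
    lam * p * q * ∫ z, (a z.1 + b z.2) ^ 2 ∂(P.prod Q) ≤
      10 * Lam * K ^ (Module.finrank ℝ E + 2) * ∫ z in S, (a z.1 + b z.2) ^ 2 ∂(P.prod Q) := by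
  have h := mul_lintegral_enorm_add_sq_le_setLIntegral hΩ hl hu hQ hp hq hK hdist hS
    hSfst hSsnd ha hb
  rw [← ofReal_integral_sq_eq_lintegral_enorm_sq hab,
    ← ofReal_integral_sq_eq_lintegral_enorm_sq (hab.restrict S)] at h
  refine (ENNReal.ofReal_le_ofReal_iff (by positivity)).1 ?_
  rwa [ENNReal.ofReal_mul (by positivity), ENNReal.ofReal_mul (by positivity),
    ENNReal.ofReal_mul hlam, ENNReal.ofReal_mul (by positivity),
    ENNReal.ofReal_mul (by positivity), ENNReal.ofReal_mul (by positivity), ENNReal.ofReal_ofNat,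
    ENNReal.ofReal_pow (by positivity), ENNReal.ofReal_natCast]

end ConvexMargin

theorem mul_max_add_sub_max_nonneg (X h : ℝ) : 0 ≤ (max (X + h) 0 - max X 0) * h := by
  obtain hh | hh := le_total 0 h
  · exact mul_nonneg (sub_nonneg.2 (max_le_max_right _ (by linarith))) hh
  · exact mul_nonneg_of_nonpos_of_nonpos (sub_nonpos.2 (max_le_max_right _ (by linarith))) hh

theorem abs_max_add_sub_max_le (X h : ℝ) : |max (X + h) 0 - max X 0| ≤ |h| := by
  simpa using abs_max_sub_max_le_abs (X + h) X 0

theorem mul_sq_le_mul_max_add_sub_max_mul {s M X h : ℝ} (hs : 0 ≤ s) (hsM : s ≤ M) (hX : s ≤ X)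
    (hh : |h| ≤ M) : s * h ^ 2 ≤ M * ((max (X + h) 0 - max X 0) * h) := by
  rw [max_eq_left (hs.trans hX)]
  obtain hXh | hXh := le_total 0 (X + h)
  · rw [max_eq_left hXh, add_sub_cancel_left, ← sq]
    gcongr
  · have hneg : h ≤ 0 := by linarith
    have hsh : s * -h ≤ M * X := by
      rw [abs_of_nonpos hneg] at hh
      nlinarith
    rw [max_eq_right hXh]
    nlinarith

section L2

variable {α : Type*} [MeasurableSpace α] {ν : Measure α}

theorem memLp_max_add_sub_max {X h : α → ℝ} (hX : AEMeasurable X ν) (hh : MemLp h 2 ν) :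
    MemLp (fun z ↦ max (X z + h z) 0 - max (X z) 0) 2 ν := by
  have hhm := hh.aemeasurable
  exact hh.of_le (by fun_prop) (.of_forall fun z ↦ abs_max_add_sub_max_le (X z) (h z))

theorem mul_setIntegral_sq_le {X h : α → ℝ} (hX : Measurable X) (hh : MemLp h 2 ν) {s M : ℝ}
    (hs : 0 ≤ s) (hsM : s ≤ M) (hhM : ∀ᵐ z ∂ν, |h z| ≤ M) :
    s * ∫ z in {z | s ≤ X z}, h z ^ 2 ∂ν ≤
      M * ∫ z, (max (X z + h z) 0 - max (X z) 0) * h z ∂ν := by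
  have hS : MeasurableSet {z | s ≤ X z} := measurableSet_le measurable_const hX
  have hint := ((memLp_max_add_sub_max hX.aemeasurable hh).integrable_mul hh).const_mul M
  rw [← integral_const_mul, ← integral_const_mul]
  calc ∫ z in {z | s ≤ X z}, s * h z ^ 2 ∂ν
      ≤ ∫ z in {z | s ≤ X z}, M * ((max (X z + h z) 0 - max (X z) 0) * h z) ∂ν := by
        refine setIntegral_mono_on_ae (hh.integrable_sq.const_mul s).integrableOn
          hint.integrableOn hS ?_
        filter_upwards [hhM] with z hz hzX
        exact mul_sq_le_mul_max_add_sub_max_mul hs hsM hzX hz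
    _ ≤ ∫ z, M * ((max (X z + h z) 0 - max (X z) 0) * h z) ∂ν :=
        setIntegral_le_integral hint <| .of_forall fun z ↦
          mul_nonneg (hs.trans hsM) (mul_max_add_sub_max_nonneg (X z) (h z))

theorem two_mul_integral_mul_le {u v : α → ℝ} (hu : MemLp u 2 ν) (hv : MemLp v 2 ν) :
    2 * ∫ x, u x * v x ∂ν ≤ ∫ x, u x ^ 2 ∂ν + ∫ x, v x ^ 2 ∂ν := by
  rw [← integral_const_mul, ← integral_add hu.integrable_sq hv.integrable_sq]
  refine integral_mono ((hu.integrable_mul hv).const_mul 2)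
    (hu.integrable_sq.add hv.integrable_sq) fun x ↦ ?_
  simpa [mul_assoc] using two_mul_le_add_sq (u x) (v x)

theorem sq_integral_le_integral_sq [IsProbabilityMeasure ν] {u : α → ℝ} (hu : MemLp u 2 ν) :
    (∫ x, u x ∂ν) ^ 2 ≤ ∫ x, u x ^ 2 ∂ν := by
  have h := ProbabilityTheory.variance_nonneg u ν
  rw [ProbabilityTheory.variance_eq_sub hu] at h
  simpa using h

end L2

section Marginals

variable {X Y : Type*} [MeasurableSpace X] [MeasurableSpace Y] {P : Measure X} {Q : Measure Y}
  [IsProbabilityMeasure Q] {a : X → ℝ} {b : Y → ℝ} {Z : X × Y → ℝ}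

theorem memLp_two_integral_prodMk [SFinite P] (hZ : MemLp Z 2 (P.prod Q)) :
    MemLp (fun x ↦ ∫ y, Z (x, y) ∂Q) 2 P := by
  have hmeas := hZ.1.integral_prod_right'
  refine (memLp_two_iff_integrable_sq hmeas).2 ?_
  refine hZ.integrable_sq.integral_prod_left.mono' (hmeas.pow 2) ?_
  filter_upwards [hZ.integrable_sq.prod_right_ae, hZ.1.prodMk_left] with x hx hxm
  rw [Real.norm_of_nonneg (sq_nonneg _)]
  exact sq_integral_le_integral_sq ((memLp_two_iff_integrable_sq hxm).2 hx)

theorem two_mul_integral_fst_mul_le [SFinite P] (ha : MemLp a 2 P) (hZ : MemLp Z 2 (P.prod Q)) :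
    2 * ∫ z, a z.1 * Z z ∂(P.prod Q) ≤ ∫ x, a x ^ 2 ∂P + ∫ x, (∫ y, Z (x, y) ∂Q) ^ 2 ∂P := by
  have hint : Integrable (fun z ↦ a z.1 * Z z) (P.prod Q) := (ha.comp_fst Q).integrable_mul hZ
  rw [integral_prod _ hint]
  simpa [integral_const_mul] using two_mul_integral_mul_le ha (memLp_two_integral_prodMk hZ)

variable [IsProbabilityMeasure P]

theorem two_mul_integral_snd_mul_le (hb : MemLp b 2 Q) (hZ : MemLp Z 2 (P.prod Q)) :
    2 * ∫ z, b z.2 * Z z ∂(P.prod Q) ≤ ∫ y, b y ^ 2 ∂Q + ∫ y, (∫ x, Z (x, y) ∂P) ^ 2 ∂Q := by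
  have hZ' : MemLp (Z ∘ Prod.swap) 2 (Q.prod P) :=
    hZ.comp_measurePreserving Measure.measurePreserving_swap
  rw [← integral_prod_swap]
  exact two_mul_integral_fst_mul_le hb hZ'

theorem integral_add_sq_eq_of_integral_eq_zero (ha : MemLp a 2 P) (hb : MemLp b 2 Q)
    (hb0 : ∫ y, b y ∂Q = 0) :
    ∫ z, (a z.1 + b z.2) ^ 2 ∂(P.prod Q) = ∫ x, a x ^ 2 ∂P + ∫ y, b y ^ 2 ∂Q := by
  have hcross : ∫ z, a z.1 * b z.2 ∂(P.prod Q) = 0 := by rw [integral_prod_mul, hb0, mul_zero]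
  have ha' := ha.comp_fst Q
  have hb' := hb.comp_snd P
  have hsq : Integrable (fun z ↦ a z.1 ^ 2 + b z.2 ^ 2) (P.prod Q) :=
    ha'.integrable_sq.add hb'.integrable_sq
  have hmul : Integrable (fun z ↦ 2 * (a z.1 * b z.2)) (P.prod Q) :=
    (ha'.integrable_mul hb').const_mul 2
  calc ∫ z, (a z.1 + b z.2) ^ 2 ∂(P.prod Q)
      = ∫ z, (a z.1 ^ 2 + b z.2 ^ 2 + 2 * (a z.1 * b z.2)) ∂(P.prod Q) := by
        congr with z
        ring
    _ = ∫ z, a z.1 ^ 2 ∂(P.prod Q) + ∫ z, b z.2 ^ 2 ∂(P.prod Q) := by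
        rw [integral_add hsq hmul, integral_const_mul, hcross, mul_zero, add_zero,
          integral_add ha'.integrable_sq hb'.integrable_sq]
    _ = ∫ x, a x ^ 2 ∂P + ∫ y, b y ^ 2 ∂Q := by
        rw [integral_fun_fst (fun x ↦ a x ^ 2), integral_fun_snd (fun y ↦ b y ^ 2)]
        simp

theorem two_mul_integral_add_mul_le (ha : MemLp a 2 P) (hb : MemLp b 2 Q)
    (hZ : MemLp Z 2 (P.prod Q)) :
    2 * ∫ z, (a z.1 + b z.2) * Z z ∂(P.prod Q) ≤ ∫ z, (a z.1 + b z.2) ^ 2 ∂(P.prod Q) +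
      (∫ x, (∫ y, Z (x, y) ∂Q) ^ 2 ∂P + ∫ y, (∫ x, Z (x, y) ∂P) ^ 2 ∂Q) := by
  wlog hb0 : ∫ y, b y ∂Q = 0 generalizing a b
  · set m := ∫ y, b y ∂Q with hm
    have hbi : Integrable b Q := hb.integrable one_le_two
    have hcenter := this (ha.add (memLp_const m)) (hb.sub (memLp_const m))
      ((integral_sub hbi (integrable_const m)).trans (by simp [hm]))
    simpa using hcenter
  rw [integral_add_sq_eq_of_integral_eq_zero ha hb hb0]
  have hsplit : ∫ z, (a z.1 + b z.2) * Z z ∂(P.prod Q) =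
      ∫ z, a z.1 * Z z ∂(P.prod Q) + ∫ z, b z.2 * Z z ∂(P.prod Q) := by
    simp only [add_mul]
    exact integral_add ((ha.comp_fst Q).integrable_mul hZ) ((hb.comp_snd P).integrable_mul hZ)
  linarith [two_mul_integral_fst_mul_le ha hZ, two_mul_integral_snd_mul_le hb hZ]

theorem sqrt_integral_add_sq_le {Ψ : X × Y → ℝ} (hΨ : Measurable Ψ) (ha : MemLp a 2 P)
    (hb : MemLp b 2 Q) {s M G : ℝ} (hs : 0 < s) (hsM : s ≤ M) (hG : 0 ≤ G)
    (habM : ∀ᵐ z ∂(P.prod Q), |a z.1 + b z.2| ≤ M)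
    (hmargin : ∫ z, (a z.1 + b z.2) ^ 2 ∂(P.prod Q) ≤
      G * ∫ z in {z | s ≤ Ψ z}, (a z.1 + b z.2) ^ 2 ∂(P.prod Q)) :
    √(∫ z, (a z.1 + b z.2) ^ 2 ∂(P.prod Q)) ≤ G * M / s *
      √(∫ x, (∫ y, (max (Ψ (x, y) + (a x + b y)) 0 - max (Ψ (x, y)) 0) ∂Q) ^ 2 ∂P +
        ∫ y, (∫ x, (max (Ψ (x, y) + (a x + b y)) 0 - max (Ψ (x, y)) 0) ∂P) ^ 2 ∂Q) := by
  have hM : 0 ≤ M := hs.le.trans hsM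
  have hab : MemLp (fun z : X × Y ↦ a z.1 + b z.2) 2 (P.prod Q) :=
    (ha.comp_fst Q).add (hb.comp_snd P)
  set κ := G * M / s with hκ
  have hκ0 : 0 ≤ κ := by positivity
  set Z : X × Y → ℝ := fun z ↦ max (Ψ z + (a z.1 + b z.2)) 0 - max (Ψ z) 0
  have hZ : MemLp Z 2 (P.prod Q) := memLp_max_add_sub_max hΨ.aemeasurable hab
  set N := ∫ z, (a z.1 + b z.2) ^ 2 ∂(P.prod Q)
  have hmono : N ≤ κ * ∫ z, (a z.1 + b z.2) * Z z ∂(P.prod Q) := by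
    have h := mul_setIntegral_sq_le hΨ hab hs.le hsM habM
    simp only [mul_comm (a _ + b _)]
    rw [hκ, div_mul_eq_mul_div, le_div_iff₀ hs]
    nlinarith [mul_le_mul_of_nonneg_left h hG, mul_le_mul_of_nonneg_right hmargin hs.le]
  have hyoung := two_mul_integral_add_mul_le ha hb (hZ.const_mul κ)
  simp only [integral_const_mul, mul_pow, mul_left_comm _ κ] at hyoung
  rw [← Real.sqrt_sq hκ0, ← Real.sqrt_mul (sq_nonneg κ)]
  exact Real.sqrt_le_sqrt (by linarith)

end Marginals

section Slack

variable {X Y : Type*} [PseudoMetricSpace X] [PseudoMetricSpace Y] {κ : NNReal}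

theorem lipschitzWith_slack {F : X → ℝ} {G : Y → ℝ} {c : X → Y → ℝ} (hF : LipschitzWith κ F)
    (hG : LipschitzWith κ G) (hc : LipschitzWith κ (Function.uncurry c)) :
    LipschitzWith (3 * κ) fun z : X × Y ↦ F z.1 + G z.2 - c z.1 z.2 := by
  have h := ((hF.comp LipschitzWith.prod_fst).add (hG.comp LipschitzWith.prod_snd)).sub hc
  rwa [mul_one, ← two_mul, ← add_one_mul, two_add_one_eq_three] at h

theorem closedBall_subset_superlevel {Ψ : X → ℝ} (hΨ : LipschitzWith κ Ψ) {x : X} {t r : ℝ}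
    (hx : t ≤ Ψ x) : closedBall x r ⊆ {w | t - κ * r ≤ Ψ w} := fun w hw ↦ by
  have hdist : dist (Ψ x) (Ψ w) ≤ κ * r :=
    (hΨ.dist_le_mul x w).trans (by gcongr; exact dist_comm x w ▸ hw)
  change t - κ * r ≤ Ψ w
  linarith [(le_abs_self _).trans hdist]

end Slack

section FirstOrderCondition

variable {Y : Type*} [MeasurableSpace Y] {ν : Measure Y} {φ h : Y → ℝ} {ε : ℝ}

theorem integrable_max_zero_of_integral_eq (hε : ε ≠ 0) (hφ : ∫ y, max (φ y) 0 ∂ν = ε) :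
    Integrable (fun y ↦ max (φ y) 0) ν :=
  Integrable.of_integral_ne_zero (hφ.trans_ne hε)

theorem exists_mem_le_of_integral_max_zero_eq [IsProbabilityMeasure ν] (hε : 0 < ε)
    (hφ : ∫ y, max (φ y) 0 ∂ν = ε) {s : Set Y} (hs : ∀ᵐ y ∂ν, y ∈ s) : ∃ y ∈ s, ε ≤ φ y := by
  obtain ⟨y, hy, hle⟩ :=
    exists_notMem_null_integral_le (integrable_max_zero_of_integral_eq hε.ne' hφ) hs
  rw [hφ, le_max_iff, or_iff_left hε.not_ge] at hle
  exact ⟨y, not_not.1 hy, hle⟩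

theorem integral_max_add_sub_max_eq (hε : ε ≠ 0) (hφm : AEMeasurable φ ν)
    (hφ : ∫ y, max (φ y) 0 ∂ν = ε) (hh : Integrable h ν) :
    ∫ y, (max (φ y + h y) 0 - max (φ y) 0) ∂ν =
      -(ε * (1 - 1 / ε * ∫ y, max (φ y + h y) 0 ∂ν)) := by
  have hφi := integrable_max_zero_of_integral_eq hε hφ
  have hhm := hh.aemeasurable
  have hsub : Integrable (fun y ↦ max (φ y + h y) 0 - max (φ y) 0) ν :=
    hh.mono (AEMeasurable.aestronglyMeasurable (by fun_prop))
      (.of_forall fun y ↦ abs_max_add_sub_max_le (φ y) (h y))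
  have hadd : Integrable (fun y ↦ max (φ y + h y) 0) ν := by
    simpa [Pi.add_def] using hsub.add hφi
  rw [integral_sub hadd hφi, hφ]
  field_simp
  ring

end FirstOrderCondition

theorem exists_abs_sub_le {X : Type*} [PseudoMetricSpace X] {κ : NNReal} {f F : X → ℝ} {s : Set X}
    (hs : Bornology.IsBounded s) (hf : ∃ C, ∀ x ∈ s, |f x| ≤ C) (hF : LipschitzWith κ F) :
    ∃ C, ∀ x ∈ s, |f x - F x| ≤ C := by
  obtain ⟨C, hC⟩ := hf
  obtain ⟨D, hD⟩ := (hF.isBounded_image hs).exists_norm_le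
  exact ⟨C + D, fun x hx ↦ (abs_sub _ _).trans
    (add_le_add (hC x hx) (hD _ (Set.mem_image_of_mem F hx)))⟩

theorem iInf_toReal_ball_pos {Y : Type*} [PseudoMetricSpace Y] [MeasurableSpace Y]
    {Q : Measure Y} [IsFiniteMeasure Q] {s : Set Y} (hs : TotallyBounded s) (hne : s.Nonempty)
    (hQ : ∀ y ∈ s, ∀ r > 0, 0 < Q (ball y r)) {r : ℝ} (hr : 0 < r) :
    0 < ⨅ y : s, (Q (ball (y : Y) r)).toReal := by
  obtain ⟨t, hts, ht, hcover⟩ := finite_approx_of_totallyBounded hs _ (half_pos hr)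
  simp only [Set.subset_def, Set.mem_iUnion, exists_prop] at hcover
  have htne : t.Nonempty := hne.elim fun y hy ↦ (hcover y hy).imp fun _ h ↦ h.1
  obtain ⟨y₀, hy₀, hmin⟩ := t.exists_min_image (fun y ↦ (Q (ball y (r / 2))).toReal) ht htne
  have hpos : 0 < (Q (ball y₀ (r / 2))).toReal :=
    ENNReal.toReal_pos (hQ y₀ (hts hy₀) _ (half_pos hr)).ne' (measure_ne_top _ _)
  have := hne.to_subtype
  refine hpos.trans_le (le_ciInf fun ⟨y, hy⟩ ↦ ?_)
  obtain ⟨u, hu, hyu⟩ := hcover y hy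
  refine (hmin u hu).trans (ENNReal.toReal_mono (measure_ne_top _ _) (measure_mono ?_))
  refine ball_subset_ball' ?_
  linarith [mem_ball'.1 hyu]

theorem ae_abs_le_essSup {α : Type*} [MeasurableSpace α] {ν : Measure α} {u : α → ℝ} {C : ℝ}
    (hu : ∀ᵐ z ∂ν, |u z| ≤ C) : ∀ᵐ z ∂ν, |u z| ≤ essSup (fun z ↦ |u z|) ν :=
  ae_le_essSup (Filter.isBoundedUnder_of_eventually_le hu)

theorem dist_le_ceil_diam_div_mul {X : Type*} [PseudoMetricSpace X] {s : Set X}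
    (hs : Bornology.IsBounded s) {r : ℝ} (hr : 0 < r) {x y : X} (hx : x ∈ s) (hy : y ∈ s) :
    dist x y ≤ ⌈diam s / r⌉₊ * r :=
  (dist_le_diam_of_mem hs hx hy).trans ((div_le_iff₀ hr).1 (Nat.le_ceil _))

theorem inv_min_pow_one {r : ℝ} (hr : 0 < r) (n : ℕ) : (min (r ^ n) 1)⁻¹ = max r⁻¹ 1 ^ n := by
  rcases le_total r 1 with h | h
  · rw [min_eq_left (pow_le_one₀ hr.le h), max_eq_left ((one_le_inv₀ hr).2 h), inv_pow]
  · rw [min_eq_right (one_le_pow₀ h), max_eq_right (inv_le_one_of_one_le₀ h), inv_one, one_pow]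

theorem diam_pos_of_le_smul_restrict {X : Type*} [MetricSpace X] [MeasurableSpace X]
    {μ P : Measure X} [NullSingletonClass μ] [NeZero P] {s : Set X} {C : ℝ≥0∞}
    (hs : Bornology.IsBounded s) (hP : P ≤ C • μ.restrict s) : 0 < diam s := by
  refine diam_pos (Set.not_subsingleton_iff.1 fun hsub ↦ NeZero.ne P ?_) hs
  have hμ : μ.restrict s = 0 := Measure.restrict_eq_zero.2 (hsub.measure_zero μ)
  rwa [hμ, smul_zero, Measure.nonpos_iff_eq_zero'] at hP

theorem ofReal_iInf_toReal_ball_le {Y : Type*} [PseudoMetricSpace Y] [MeasurableSpace Y]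
    (Q : Measure Y) (s : Set Y) (r : ℝ) {y : Y} (hy : y ∈ s) :
    ENNReal.ofReal (⨅ y : s, (Q (ball (y : Y) r)).toReal) ≤ Q (ball y r) :=
  ENNReal.ofReal_le_of_le_toReal
    (ciInf_le ⟨0, Set.forall_mem_range.2 fun _ ↦ ENNReal.toReal_nonneg⟩ (⟨y, hy⟩ : s))

section WithDensity

variable {α : Type*} [MeasurableSpace α] {ν : Measure α} {s : Set α} {ρ : α → ℝ}

theorem smul_restrict_le_withDensity (hs : MeasurableSet s) {C : ℝ} (h : ∀ x ∈ s, C ≤ ρ x) :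
    ENNReal.ofReal C • ν.restrict s ≤
      (ν.restrict s).withDensity fun x ↦ ENNReal.ofReal (ρ x) := by
  rw [← withDensity_const]
  exact withDensity_mono ((ae_restrict_mem hs).mono fun x hx ↦ ENNReal.ofReal_le_ofReal (h x hx))

theorem withDensity_le_smul_restrict (hs : MeasurableSet s) {C : ℝ} (h : ∀ x ∈ s, ρ x ≤ C) :
    (ν.restrict s).withDensity (fun x ↦ ENNReal.ofReal (ρ x)) ≤
      ENNReal.ofReal C • ν.restrict s := by
  rw [← withDensity_const]
  exact withDensity_mono ((ae_restrict_mem hs).mono fun x hx ↦ ENNReal.ofReal_le_ofReal (h x hx))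

end WithDensity

/-- The first component `x ↦ 1 - (1/ε) ∫ (f(x) + g(y) - c(x,y))₊ dν(y)` of the gradient of the
dual objective of quadratically regularized optimal transport; the second component is obtained by
exchanging the roles of the two spaces, i.e. from the cost `fun y x ↦ c x y`. -/
noncomputable def partialGradient {X Y : Type*} [MeasurableSpace Y] (ε : ℝ) (ν : Measure Y)
    (c : X → Y → ℝ) (f : X → ℝ) (g : Y → ℝ) (x : X) : ℝ :=
  1 - (1 / ε) * ∫ y, max (f x + g y - c x y) 0 ∂ν

section Potentials

variable {X Y : Type*} [MeasurableSpace Y] {ε : ℝ} {c : X → Y → ℝ} {F f : X → ℝ} {G g : Y → ℝ}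

theorem integral_max_add_sub_max_eq_neg_mul_partialGradient {ν : Measure Y} [IsFiniteMeasure ν]
    (hε : ε ≠ 0) {x : X} (hx : ∫ y, max (F x + G y - c x y) 0 ∂ν = ε)
    (hm : Measurable fun y ↦ F x + G y - c x y) (hg : Integrable (fun y ↦ g y - G y) ν) :
    ∫ y, (max (F x + G y - c x y + (f x - F x + (g y - G y))) 0 -
      max (F x + G y - c x y) 0) ∂ν = -(ε * partialGradient ε ν c f g x) := by
  have hadd (y : Y) : F x + G y - c x y + (f x - F x + (g y - G y)) = f x + g y - c x y := by ring
  have h := integral_max_add_sub_max_eq hε hm.aemeasurable hx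
    ((integrable_const (f x - F x)).add hg)
  simp only [Pi.add_apply, hadd] at h ⊢
  exact h

variable [MeasurableSpace X] {P : Measure X} [IsProbabilityMeasure P] {Q : Measure Y}
  [IsProbabilityMeasure Q]

theorem sqrt_integral_sub_sq_le_of_margin (hε : 0 < ε)
    (hslack : Measurable fun z : X × Y ↦ F z.1 + G z.2 - c z.1 z.2)
    (hfst : ∀ᵐ x ∂P, ∫ y, max (F x + G y - c x y) 0 ∂Q = ε)
    (hsnd : ∀ᵐ y ∂Q, ∫ x, max (F x + G y - c x y) 0 ∂P = ε)
    (hf : MemLp (fun x ↦ f x - F x) 2 P) (hg : MemLp (fun y ↦ g y - G y) 2 Q) {s M C : ℝ}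
    (hs : 0 < s) (hsM : s ≤ M) (hC : 0 ≤ C)
    (hM : ∀ᵐ z ∂(P.prod Q), |f z.1 - F z.1 + (g z.2 - G z.2)| ≤ M)
    (hmargin : ∫ z, (f z.1 - F z.1 + (g z.2 - G z.2)) ^ 2 ∂(P.prod Q) ≤
      C * ∫ z in {z | s ≤ F z.1 + G z.2 - c z.1 z.2},
        (f z.1 - F z.1 + (g z.2 - G z.2)) ^ 2 ∂(P.prod Q)) :
    √(∫ z, (f z.1 - F z.1 + (g z.2 - G z.2)) ^ 2 ∂(P.prod Q)) ≤ C * M / s * (ε *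
      √(∫ x, partialGradient ε Q c f g x ^ 2 ∂P +
        ∫ y, partialGradient ε P (fun y x ↦ c x y) g f y ^ 2 ∂Q)) := by
  refine (sqrt_integral_add_sq_le hslack hf hg hs hsM hC hM hmargin).trans_eq ?_
  have hgradFst : ∀ᵐ x ∂P, (∫ y, (max (F x + G y - c x y + (f x - F x + (g y - G y))) 0 -
      max (F x + G y - c x y) 0) ∂Q) ^ 2 = ε ^ 2 * partialGradient ε Q c f g x ^ 2 := by
    filter_upwards [hfst] with x hx
    rw [integral_max_add_sub_max_eq_neg_mul_partialGradient hε.ne' hx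
      (hslack.comp measurable_prodMk_left) (hg.integrable one_le_two), neg_sq, mul_pow]
  have hgradSnd : ∀ᵐ y ∂Q, (∫ x, (max (F x + G y - c x y + (f x - F x + (g y - G y))) 0 -
      max (F x + G y - c x y) 0) ∂P) ^ 2 =
      ε ^ 2 * partialGradient ε P (fun y x ↦ c x y) g f y ^ 2 := by
    filter_upwards [hsnd] with y hy
    have hm : Measurable fun x ↦ F x + G y - c x y := hslack.comp measurable_prodMk_right
    simp only [add_comm (F _) (G y), add_comm (f _ - F _)] at hy hm ⊢
    rw [integral_max_add_sub_max_eq_neg_mul_partialGradient (c := fun y x ↦ c x y) hε.ne' hy hm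
      (hf.integrable one_le_two), neg_sq, mul_pow]
  rw [integral_congr_ae hgradFst, integral_congr_ae hgradSnd, integral_const_mul,
    integral_const_mul, ← mul_add, Real.sqrt_mul (sq_nonneg ε), Real.sqrt_sq hε.le]

end Potentials

section ConvexPotentials

variable {E Y : Type*} [NormedAddCommGroup E] [NormedSpace ℝ E] [FiniteDimensional ℝ E]
  [MeasurableSpace E] [BorelSpace E] {μ : Measure E} [μ.IsAddHaarMeasure]
  [PseudoMetricSpace Y] [MeasurableSpace Y] [OpensMeasurableSpace Y]
  {Ω : Set E} {Ω' : Set Y} {P : Measure E} [IsProbabilityMeasure P]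
  {Q : Measure Y} [IsProbabilityMeasure Q] {c : E → Y → ℝ} {f F : E → ℝ} {g G : Y → ℝ} {ε : ℝ}

theorem mul_integral_sub_sq_le_setIntegral_slack {lam Lam p q r : ℝ} {K : ℕ} {κ : NNReal}
    (hε : 0 < ε) (hlam : 0 ≤ lam) (hLam : 0 ≤ Lam) (hp0 : 0 ≤ p) (hq0 : 0 ≤ q) (hΩ : Convex ℝ Ω)
    (hl : ENNReal.ofReal lam • μ.restrict Ω ≤ P) (hu : P ≤ ENNReal.ofReal Lam • μ.restrict Ω)
    (hQ : ∀ᵐ y ∂Q, y ∈ Ω') (hp : ∀ x ∈ Ω, ENNReal.ofReal p ≤ P (ball x r))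
    (hq : ∀ y ∈ Ω', ENNReal.ofReal q ≤ Q (ball y r))
    (hK : 1 ≤ K) (hdist : ∀ u ∈ Ω, ∀ v ∈ Ω, dist u v ≤ K * r)
    (hF : LipschitzWith κ F) (hG : LipschitzWith κ G) (hc : LipschitzWith κ (Function.uncurry c))
    (hfst : ∀ x ∈ Ω, ∫ y, max (F x + G y - c x y) 0 ∂Q = ε)
    (hsnd : ∀ y ∈ Ω', ∫ x, max (F x + G y - c x y) 0 ∂P = ε)
    (hf : Measurable f) (hg : Measurable g)
    (hfg : MemLp (fun z : E × Y ↦ f z.1 - F z.1 + (g z.2 - G z.2)) 2 (P.prod Q)) :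
    lam * p * q * ∫ z, (f z.1 - F z.1 + (g z.2 - G z.2)) ^ 2 ∂(P.prod Q) ≤
      10 * Lam * K ^ (Module.finrank ℝ E + 2) *
        ∫ z in {z | ε - (3 * κ : NNReal) * r ≤ F z.1 + G z.2 - c z.1 z.2},
          (f z.1 - F z.1 + (g z.2 - G z.2)) ^ 2 ∂(P.prod Q) := by
  have hslack := lipschitzWith_slack hF hG hc
  have hFm := hF.continuous.measurable
  have hGm := hG.continuous.measurable
  refine mul_integral_add_sq_le_setIntegral hlam hLam hp0 hq0 hΩ hl hu hQ hp hq hK hdist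
    (measurableSet_le measurable_const hslack.continuous.measurable) (fun x hx ↦ ?_)
    (fun y hy ↦ ?_) (hf.sub hFm) (hg.sub hGm) hfg
  · obtain ⟨y, hy, hle⟩ := exists_mem_le_of_integral_max_zero_eq hε (hfst x hx) hQ
    exact ⟨y, hy, closedBall_subset_superlevel hslack hle⟩
  · obtain ⟨x, hx, hle⟩ := exists_mem_le_of_integral_max_zero_eq hε (hsnd y hy)
      (ae_mem_of_le_smul_restrict hΩ hu)
    exact ⟨x, hx, closedBall_subset_superlevel hslack hle⟩

theorem sqrt_integral_sub_sq_le_of_lipschitzWith {lam Lam p q L M : ℝ} {K : ℕ}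
    (hε : 0 < ε) (hL : 0 < L) (hlam : 0 < lam) (hLam : 0 ≤ Lam) (hp0 : 0 < p) (hq0 : 0 < q)
    (hΩ : Convex ℝ Ω)
    (hl : ENNReal.ofReal lam • μ.restrict Ω ≤ P) (hu : P ≤ ENNReal.ofReal Lam • μ.restrict Ω)
    (hQ : ∀ᵐ y ∂Q, y ∈ Ω') (hp : ∀ x ∈ Ω, ENNReal.ofReal p ≤ P (ball x (ε / (8 * L))))
    (hq : ∀ y ∈ Ω', ENNReal.ofReal q ≤ Q (ball y (ε / (8 * L))))
    (hK : 1 ≤ K) (hdist : ∀ u ∈ Ω, ∀ v ∈ Ω, dist u v ≤ K * (ε / (8 * L)))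
    (hF : LipschitzWith L.toNNReal F) (hG : LipschitzWith L.toNNReal G)
    (hc : LipschitzWith L.toNNReal (Function.uncurry c))
    (hfst : ∀ x ∈ Ω, ∫ y, max (F x + G y - c x y) 0 ∂Q = ε)
    (hsnd : ∀ y ∈ Ω', ∫ x, max (F x + G y - c x y) 0 ∂P = ε)
    (hf : Measurable f) (hg : Measurable g) (hfF : MemLp (fun x ↦ f x - F x) 2 P)
    (hgG : MemLp (fun y ↦ g y - G y) 2 Q) (hεM : ε ≤ M)
    (hM : ∀ᵐ z ∂(P.prod Q), |f z.1 - F z.1 + (g z.2 - G z.2)| ≤ M) :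
    √(∫ z, (f z.1 - F z.1 + (g z.2 - G z.2)) ^ 2 ∂(P.prod Q)) ≤
      16 * p⁻¹ * (Lam / lam) * K ^ (Module.finrank ℝ E + 2) / q * M *
        √(∫ x, partialGradient ε Q c f g x ^ 2 ∂P +
          ∫ y, partialGradient ε P (fun y x ↦ c x y) g f y ^ 2 ∂Q) := by
  have hmargin := mul_integral_sub_sq_le_setIntegral_slack hε hlam.le hLam hp0.le hq0.le hΩ hl hu
    hQ hp hq hK hdist hF hG hc hfst hsnd hf hg ((hfF.comp_fst Q).add (hgG.comp_snd P))
  have hlevel : ε - (3 * L.toNNReal : NNReal) * (ε / (8 * L)) = 5 * ε / 8 := by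
    rw [NNReal.coe_mul, NNReal.coe_ofNat, Real.coe_toNNReal L hL.le]
    field_simp
    norm_num
  rw [hlevel, ← le_div_iff₀' (by positivity), ← div_mul_eq_mul_div] at hmargin
  refine (sqrt_integral_sub_sq_le_of_margin hε (lipschitzWith_slack hF hG hc).continuous.measurable
    ((ae_mem_of_le_smul_restrict hΩ hu).mono hfst) (hQ.mono hsnd) hfF hgG
    (s := 5 * ε / 8) (by positivity) (by linarith) (by positivity) hM hmargin).trans_eq ?_
  field_simp
  ring

theorem sqrt_integral_sub_sq_le_mul_essSup {lam Lam p q L : ℝ} {K : ℕ}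
    (hε : 0 < ε) (hL : 0 < L) (hlam : 0 < lam) (hLam : 0 ≤ Lam) (hp0 : 0 < p) (hq0 : 0 < q)
    (hΩ : Convex ℝ Ω) (hΩb : Bornology.IsBounded Ω) (hΩ'b : Bornology.IsBounded Ω')
    (hl : ENNReal.ofReal lam • μ.restrict Ω ≤ P) (hu : P ≤ ENNReal.ofReal Lam • μ.restrict Ω)
    (hQ : ∀ᵐ y ∂Q, y ∈ Ω') (hp : ∀ x ∈ Ω, ENNReal.ofReal p ≤ P (ball x (ε / (8 * L))))
    (hq : ∀ y ∈ Ω', ENNReal.ofReal q ≤ Q (ball y (ε / (8 * L))))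
    (hK : 1 ≤ K) (hdist : ∀ u ∈ Ω, ∀ v ∈ Ω, dist u v ≤ K * (ε / (8 * L)))
    (hF : LipschitzWith L.toNNReal F) (hG : LipschitzWith L.toNNReal G)
    (hc : LipschitzWith L.toNNReal (Function.uncurry c))
    (hfst : ∀ x ∈ Ω, ∫ y, max (F x + G y - c x y) 0 ∂Q = ε)
    (hsnd : ∀ y ∈ Ω', ∫ x, max (F x + G y - c x y) 0 ∂P = ε)
    (hf : Measurable f) (hg : Measurable g)
    (hfb : ∃ C, ∀ x ∈ Ω, |f x| ≤ C) (hgb : ∃ C, ∀ y ∈ Ω', |g y| ≤ C) :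
    √(∫ z, (f z.1 + g z.2 - (F z.1 + G z.2)) ^ 2 ∂(P.prod Q)) ≤
      16 * p⁻¹ * (Lam / lam) * K ^ (Module.finrank ℝ E + 2) / q *
        max (essSup (fun z ↦ |f z.1 + g z.2 - (F z.1 + G z.2)|) (P.prod Q)) ε *
        √(∫ x, partialGradient ε Q c f g x ^ 2 ∂P +
          ∫ y, partialGradient ε P (fun y x ↦ c x y) g f y ^ 2 ∂Q) := by
  obtain ⟨A, hA⟩ := exists_abs_sub_le hΩb hfb hF
  obtain ⟨B, hB⟩ := exists_abs_sub_le hΩ'b hgb hG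
  have hAae : ∀ᵐ x ∂P, |f x - F x| ≤ A := (ae_mem_of_le_smul_restrict hΩ hu).mono hA
  have hBae : ∀ᵐ y ∂Q, |g y - G y| ≤ B := hQ.mono hB
  have hfF : MemLp (fun x ↦ f x - F x) 2 P :=
    .of_bound (hf.sub hF.continuous.measurable).aestronglyMeasurable A hAae
  have hgG : MemLp (fun y ↦ g y - G y) 2 Q :=
    .of_bound (hg.sub hG.continuous.measurable).aestronglyMeasurable B hBae
  have hAB : ∀ᵐ z ∂(P.prod Q), |f z.1 - F z.1 + (g z.2 - G z.2)| ≤ A + B := by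
    filter_upwards [Measure.quasiMeasurePreserving_fst.ae hAae,
      Measure.quasiMeasurePreserving_snd.ae hBae] with z hfst hsnd
    exact (abs_add_le _ _).trans (add_le_add hfst hsnd)
  simp only [add_sub_add_comm]
  exact sqrt_integral_sub_sq_le_of_lipschitzWith hε hL hlam hLam hp0 hq0 hΩ hl hu hQ hp hq hK hdist
    hF hG hc hfst hsnd hf hg hfF hgG (le_max_right _ _)
    ((ae_abs_le_essSup hAB).mono fun z hz ↦ hz.trans (le_max_left _ _))

theorem sqrt_integral_sub_sq_le_of_lipschitzOnWith {fStar : E → ℝ} {gStar : Y → ℝ}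
    {lam Lam p q L : ℝ} {K : ℕ}
    (hε : 0 < ε) (hL : 0 < L) (hlam : 0 < lam) (hLam : 0 ≤ Lam) (hp0 : 0 < p) (hq0 : 0 < q)
    (hΩ : Convex ℝ Ω) (hΩb : Bornology.IsBounded Ω) (hΩ'b : Bornology.IsBounded Ω')
    (hl : ENNReal.ofReal lam • μ.restrict Ω ≤ P) (hu : P ≤ ENNReal.ofReal Lam • μ.restrict Ω)
    (hQ : ∀ᵐ y ∂Q, y ∈ Ω') (hp : ∀ x ∈ Ω, ENNReal.ofReal p ≤ P (ball x (ε / (8 * L))))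
    (hq : ∀ y ∈ Ω', ENNReal.ofReal q ≤ Q (ball y (ε / (8 * L))))
    (hK : 1 ≤ K) (hdist : ∀ u ∈ Ω, ∀ v ∈ Ω, dist u v ≤ K * (ε / (8 * L)))
    (hfStar : LipschitzOnWith L.toNNReal fStar Ω) (hgStar : LipschitzOnWith L.toNNReal gStar Ω')
    (hc : LipschitzWith L.toNNReal (Function.uncurry c))
    (hfst : ∀ x ∈ Ω, ∫ y, max (fStar x + gStar y - c x y) 0 ∂Q = ε)
    (hsnd : ∀ y ∈ Ω', ∫ x, max (fStar x + gStar y - c x y) 0 ∂P = ε)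
    (hf : Measurable f) (hg : Measurable g)
    (hfb : ∃ C, ∀ x ∈ Ω, |f x| ≤ C) (hgb : ∃ C, ∀ y ∈ Ω', |g y| ≤ C) :
    √(∫ z, (f z.1 + g z.2 - (fStar z.1 + gStar z.2)) ^ 2 ∂(P.prod Q)) ≤
      16 * p⁻¹ * (Lam / lam) * K ^ (Module.finrank ℝ E + 2) / q *
        max (essSup (fun z ↦ |f z.1 + g z.2 - (fStar z.1 + gStar z.2)|) (P.prod Q)) ε *
        √(∫ x, partialGradient ε Q c f g x ^ 2 ∂P +
          ∫ y, partialGradient ε P (fun y x ↦ c x y) g f y ^ 2 ∂Q) := by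
  obtain ⟨F, hF, hFeq⟩ := hfStar.extend_real
  obtain ⟨G, hG, hGeq⟩ := hgStar.extend_real
  have hFae : fStar =ᵐ[P] F := (ae_mem_of_le_smul_restrict hΩ hu).mono hFeq
  have hGae : gStar =ᵐ[Q] G := hQ.mono hGeq
  have hsum : (fun z : E × Y ↦ f z.1 + g z.2 - (fStar z.1 + gStar z.2)) =ᵐ[P.prod Q]
      fun z ↦ f z.1 + g z.2 - (F z.1 + G z.2) := by
    filter_upwards [Measure.quasiMeasurePreserving_fst.ae_eq_comp hFae,
      Measure.quasiMeasurePreserving_snd.ae_eq_comp hGae] with z hfst hsnd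
    simp only [Function.comp_apply] at hfst hsnd
    rw [hfst, hsnd]
  rw [integral_congr_ae (hsum.mono fun z hz ↦ congrArg (· ^ 2) hz),
    essSup_congr_ae (hsum.mono fun z hz ↦ congrArg abs hz)]
  refine sqrt_integral_sub_sq_le_mul_essSup hε hL hlam hLam hp0 hq0 hΩ hΩb hΩ'b hl hu hQ hp hq hK
    hdist hF hG hc (fun x hx ↦ ?_) (fun y hy ↦ ?_) hf hg hfb hgb
  · rw [← hfst x hx]
    exact integral_congr_ae (hGae.mono fun y hy ↦ by simp only [hFeq hx, hy])
  · rw [← hsnd y hy]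
    exact integral_congr_ae (hFae.mono fun x hx ↦ by simp only [hGeq hy, hx])

theorem error_bound_QOT_dual_general [Nontrivial E] (hε : 0 < ε)
    (hΩ : Convex ℝ Ω) (hΩb : Bornology.IsBounded Ω) (hΩ' : TotallyBounded Ω')
    {lamP LamP : ℝ} (hlam : 0 < lamP) (hl : ENNReal.ofReal lamP • μ.restrict Ω ≤ P)
    (hu : P ≤ ENNReal.ofReal LamP • μ.restrict Ω)
    (hQ : ∀ᵐ y ∂Q, y ∈ Ω') (hQball : ∀ y ∈ Ω', ∀ r > 0, 0 < Q (ball y r))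
    {L : ℝ} (hL : 0 < L) (hc : LipschitzWith L.toNNReal (Function.uncurry c))
    {δP : ℝ} (hδP0 : 0 < δP)
    (hδP : ∀ r > 0, ∀ x ∈ Ω,
      ENNReal.ofReal (δP * min (r ^ Module.finrank ℝ E) 1) ≤ P (ball x r))
    {fStar : E → ℝ} {gStar : Y → ℝ}
    (hfStar : LipschitzOnWith L.toNNReal fStar Ω) (hgStar : LipschitzOnWith L.toNNReal gStar Ω')
    (hfst : ∀ x ∈ Ω, ∫ y, max (fStar x + gStar y - c x y) 0 ∂Q = ε)
    (hsnd : ∀ y ∈ Ω', ∫ x, max (fStar x + gStar y - c x y) 0 ∂P = ε)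
    (hf : Measurable f) (hg : Measurable g)
    (hfb : ∃ C, ∀ x ∈ Ω, |f x| ≤ C) (hgb : ∃ C, ∀ y ∈ Ω', |g y| ≤ C) :
    √(∫ z, (f z.1 + g z.2 - (fStar z.1 + gStar z.2)) ^ 2 ∂(P.prod Q)) ≤
      16 * (δP⁻¹ * max (8 * L / ε) 1 ^ Module.finrank ℝ E) * (LamP ^ 2 / lamP ^ 2) *
          (⌈8 * L * diam Ω / ε⌉ : ℝ) ^ (Module.finrank ℝ E + 2) /
          (⨅ y : Ω', (Q (ball (y : Y) (ε / (8 * L)))).toReal) *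
        max (essSup (fun z ↦ |f z.1 + g z.2 - (fStar z.1 + gStar z.2)|) (P.prod Q)) ε *
        √(∫ x, partialGradient ε Q c f g x ^ 2 ∂P +
          ∫ y, partialGradient ε P (fun y x ↦ c x y) g f y ^ 2 ∂Q) := by
  have hr : 0 < ε / (8 * L) := by positivity
  have hΩ'ne : Ω'.Nonempty := hQ.exists
  have hdiam := diam_pos_of_le_smul_restrict hΩb hu
  have hle : lamP ≤ LamP :=
    (ENNReal.ofReal_le_ofReal_iff'.1 (le_of_smul_le_of_le_smul hl hu)).resolve_right hlam.not_ge
  have hratio : LamP / lamP ≤ LamP ^ 2 / lamP ^ 2 := by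
    rw [← div_pow]
    exact le_self_pow₀ ((one_le_div hlam).2 hle) two_ne_zero
  have hceil : (⌈8 * L * diam Ω / ε⌉ : ℝ) = ⌈diam Ω / (ε / (8 * L))⌉₊ := by
    rw [natCast_ceil_eq_intCast_ceil (by positivity), div_div_eq_mul_div, mul_comm (diam Ω)]
  have hq0 := iInf_toReal_ball_pos hΩ' hΩ'ne hQball hr
  set q := ⨅ y : Ω', (Q (ball (y : Y) (ε / (8 * L)))).toReal
  refine (sqrt_integral_sub_sq_le_of_lipschitzOnWith hε hL hlam (hlam.le.trans hle) (by positivity)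
    hq0 hΩ hΩb hΩ'.isBounded hl hu hQ (hδP _ hr) (fun y hy ↦ ofReal_iInf_toReal_ball_le Q Ω' _ hy)
    (Nat.one_le_ceil_iff.2 (by positivity)) (fun u hu v hv ↦ dist_le_ceil_diam_div_mul hΩb hr hu hv)
    hfStar hgStar hc hfst hsnd hf hg hfb hgb).trans ?_
  rw [hceil, mul_inv, inv_min_pow_one hr, inv_div]
  gcongr

end ConvexPotentials

/-- Error bound for the QOT dual (first half of Theorem 2.4). -/
theorem error_bound_QOT_dual
    (d : ℕ) (hd : 1 ≤ d) (ε : ℝ) (hε : 0 < ε)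
    (Ω Ω' : Set (EuclideanSpace ℝ (Fin d)))
    (hΩc : IsCompact Ω) (hΩconv : Convex ℝ Ω) (hΩne : Ω.Nonempty)
    (hΩ'c : IsCompact Ω') (hΩ'ne : Ω'.Nonempty)
    (P Q : Measure (EuclideanSpace ℝ (Fin d)))
    [IsProbabilityMeasure P] [IsProbabilityMeasure Q]
    (ρ : EuclideanSpace ℝ (Fin d) → ℝ) (hρm : Measurable ρ)
    (lamP LamP : ℝ) (hlam : 0 < lamP)
    (hPdef : P = (volume.restrict Ω).withDensity fun x => ENNReal.ofReal (ρ x))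
    (hρlb : ∀ x ∈ Ω, lamP ≤ ρ x) (hρub : ∀ x ∈ Ω, ρ x ≤ LamP)
    (hQsupp : Q Ω'ᶜ = 0) (hQball : ∀ y ∈ Ω', ∀ r > 0, 0 < Q (Metric.ball y r))
    (c : EuclideanSpace ℝ (Fin d) → EuclideanSpace ℝ (Fin d) → ℝ)
    (L : ℝ) (hL : 0 < L)
    (hc : LipschitzWith (Real.toNNReal L) (Function.uncurry c))
    (δP : ℝ) (hδP0 : 0 < δP) (hδP1 : δP ≤ 1)
    (hδP : ∀ r > 0, ∀ x ∈ Ω, ENNReal.ofReal (δP * min (r ^ d) 1) ≤ P (Metric.ball x r))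
    (fStar gStar : EuclideanSpace ℝ (Fin d) → ℝ)
    (hfsLip : LipschitzOnWith (Real.toNNReal L) fStar Ω)
    (hgsLip : LipschitzOnWith (Real.toNNReal L) gStar Ω')
    (hFOC1 : ∀ x ∈ Ω, ∫ y, max (fStar x + gStar y - c x y) 0 ∂Q = ε)
    (hFOC2 : ∀ y ∈ Ω', ∫ x, max (fStar x + gStar y - c x y) 0 ∂P = ε)
    (f g : EuclideanSpace ℝ (Fin d) → ℝ) (hfm : Measurable f) (hgm : Measurable g)
    (Cf : ℝ) (hfb : ∀ x ∈ Ω, |f x| ≤ Cf) (Cg : ℝ) (hgb : ∀ y ∈ Ω', |g y| ≤ Cg) :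
    Real.sqrt (∫ p, (f p.1 + g p.2 - (fStar p.1 + gStar p.2)) ^ 2 ∂(P.prod Q)) ≤
      gammaEps ε L δP lamP LamP Ω Ω' Q *
        max (essSup (fun p => |f p.1 + g p.2 - (fStar p.1 + gStar p.2)|) (P.prod Q)) ε *
        Real.sqrt ((∫ x, (D1Gamma ε Q c f g x) ^ 2 ∂P) + ∫ y, (D2Gamma ε P c f g y) ^ 2 ∂Q) := by
  have hfinrank : Module.finrank ℝ (EuclideanSpace ℝ (Fin d)) = d := finrank_euclideanSpace_fin
  have : Nontrivial (EuclideanSpace ℝ (Fin d)) :=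
    Module.nontrivial_of_finrank_pos (R := ℝ) (by omega)
  have hD2 : D2Gamma ε P c f g = partialGradient ε P (fun y x ↦ c x y) g f := by
    funext y
    simp only [D2Gamma, partialGradient, add_comm (f _)]
  have h := error_bound_QOT_dual_general (μ := volume) hε hΩconv hΩc.isBounded
    hΩ'c.totallyBounded hlam (hPdef ▸ smul_restrict_le_withDensity hΩc.measurableSet hρlb)
    (hPdef ▸ withDensity_le_smul_restrict hΩc.measurableSet hρub) (mem_ae_iff.2 hQsupp) hQball
    hL hc hδP0 (by rwa [hfinrank]) hfsLip hgsLip hFOC1 hFOC2 hfm hgm ⟨Cf, hfb⟩ ⟨Cg, hgb⟩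
  rw [hfinrank] at h
  rwa [hD2]
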